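/- Let ℓ ≥ 1, ν ≥ 1, let p ≥ 2 be a real number, and set s = 1 − 1/p (so that sp = p − 1 ≥ 1). Let K₁, K₂ ⊆ ℝ^ν be nonempty disjoint compact sets, and let u : B^ℓ → ℝ^ν be measurable with u(x) ∈ K₁ ∪ K₂ for almost every x ∈ B^ℓ and with E^{s,p}_{B^ℓ}(u) < ∞. Then either u(x) ∈ K₁ for almost every x ∈ B^ℓ, or u(x) ∈ K₂ for almost every x ∈ B^ℓ. -/

import Mathlib

open Metric Set MeasureTheory
open scoped ENNReal

noncomputable section

/-- The Gagliardo energy `E^{s,p}` on a set `A ⊆ ℝ^ℓ`. -/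
def gagliardoE {l ν : ℕ} (s p : ℝ) (A : Set (EuclideanSpace ℝ (Fin l)))
    (u : EuclideanSpace ℝ (Fin l) → EuclideanSpace ℝ (Fin ν)) : ℝ≥0∞ :=
  ∫⁻ x in A, ∫⁻ y in A, ENNReal.ofReal (‖u y - u x‖ ^ p / ‖y - x‖ ^ ((l : ℝ) + s * p))

/-!
Let `P` and `Q` be the preimages of `K₁` and `K₂`. As `K₁` and `K₂` are a positive distance apart,
finite energy bounds `∫_P ∫_Q |y - x|^{-(ℓ+σ)} = ∫ φ(h) |h|^{-(ℓ+σ)} dh`, where `σ = sp ≥ 1` and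
`φ(h)` is the measure of the set of `x ∈ P` with `x + h ∈ Q`. Cutting a jump by `2h` at its
midpoint, which stays in the convex domain, gives `φ(2h) ≤ 2 φ(h)`. Together with `σ ≥ 1` this says
that the finite measure `φ(h) |h|^{-(ℓ+σ)} dh` gives the ball of radius `2r` about `0` no more mass
than the ball of radius `r`. By iteration it lives on `{0}`, so it vanishes; then so does the double
integral of a positive kernel over `P × Q`, and `P` or `Q` is null.
-/

section TranslationInvariance

variable {E : Type*} [AddCommGroup E] [MeasurableSpace E]

/-- The cross-covariogram of `P` and `Q`: the measure of the set of points of `P` that the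
translation by `h` carries into `Q`. -/
def crossCovariogram (μ : Measure E) (P Q : Set E) (h : E) : ℝ≥0∞ :=
  μ (P ∩ (· + h) ⁻¹' Q)

lemma crossCovariogram_two_smul_le [Module ℝ E] [MeasurableAdd E] (μ : Measure E)
    [μ.IsAddRightInvariant] {P Q : Set E} (hPQ : Convex ℝ (P ∪ Q)) (h : E) :
    crossCovariogram μ P Q ((2 : ℝ) • h) ≤ 2 * crossCovariogram μ P Q h := by
  set D := P ∩ (· + h) ⁻¹' Q with hD
  -- The midpoint `x + h` of a jump from `x ∈ P` to `x + 2h ∈ Q` lies in `P` or in `Q`, so one of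
  -- its two halves is itself a jump from `P` to `Q`.
  have subset_union : P ∩ (· + (2 : ℝ) • h) ⁻¹' Q ⊆ D ∪ (· + h) ⁻¹' D := by
    rintro x ⟨hxP, hxQ : x + (2 : ℝ) • h ∈ Q⟩
    have midpoint_eq : midpoint ℝ x (x + (2 : ℝ) • h) = x + h := by
      rw [midpoint_eq_smul_add, invOf_eq_inv]
      module
    have hmid : x + h ∈ P ∪ Q := midpoint_eq ▸ hPQ.midpoint_mem (Or.inl hxP) (Or.inr hxQ)
    rw [two_smul, ← add_assoc] at hxQ
    exact hmid.symm.imp (fun hQ => ⟨hxP, hQ⟩) (fun hP => ⟨hP, hxQ⟩)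
  calc crossCovariogram μ P Q ((2 : ℝ) • h)
      ≤ μ D + μ ((· + h) ⁻¹' D) := (measure_mono subset_union).trans (measure_union_le _ _)
    _ = 2 * crossCovariogram μ P Q h := by
      rw [measure_preimage_add_right, ← two_mul, hD, crossCovariogram]

lemma setLIntegral_setLIntegral_sub_eq_lintegral_crossCovariogram_mul [MeasurableAdd₂ E]
    (μ : Measure E) [SFinite μ] [μ.IsAddLeftInvariant] (P : Set E) {Q : Set E}
    (hQ : MeasurableSet Q) {k : E → ℝ≥0∞} (hk : Measurable k) :
    ∫⁻ x in P, ∫⁻ y in Q, k (y - x) ∂μ ∂μ = ∫⁻ h, crossCovariogram μ P Q h * k h ∂μ := by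
  have translate (x : E) :
      ∫⁻ y in Q, k (y - x) ∂μ = ∫⁻ h, Q.indicator 1 (x + h) * k h ∂μ := by
    rw [← lintegral_indicator hQ, ← lintegral_add_left_eq_self _ x]
    refine lintegral_congr fun h => ?_
    by_cases hh : x + h ∈ Q <;> simp [hh]
  have hmeas : Measurable fun z : E × E => Q.indicator (1 : E → ℝ≥0∞) (z.1 + z.2) :=
    (measurable_one.indicator hQ).comp measurable_add
  simp_rw [translate]
  rw [lintegral_lintegral_swap (hmeas.mul (hk.comp measurable_snd)).aemeasurable]
  refine lintegral_congr fun h => ?_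
  have hQh : MeasurableSet ((· + h) ⁻¹' Q) := measurable_add_const h hQ
  have hmeas_h : Measurable fun x : E => Q.indicator (1 : E → ℝ≥0∞) (x + h) :=
    (measurable_one.indicator hQ).comp (measurable_add_const h)
  rw [lintegral_mul_const _ hmeas_h]
  change (∫⁻ x in P, ((· + h) ⁻¹' Q).indicator 1 x ∂μ) * k h = _
  rw [lintegral_indicator_one hQh, Measure.restrict_apply hQh, inter_comm, crossCovariogram]

end TranslationInvariance

lemma measure_compl_singleton_eq_zero_of_measure_ball_two_mul_le {X : Type*} [MetricSpace X]
    [MeasurableSpace X] [OpensMeasurableSpace X] (ν : Measure X) [IsFiniteMeasure ν] (a : X)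
    (hν : ∀ r > 0, ν (ball a (2 * r)) ≤ ν (ball a r)) : ν {a}ᶜ = 0 := by
  have iterate (r : ℝ) (hr : 0 < r) (n : ℕ) : ν (ball a (2 ^ n * r)) ≤ ν (ball a r) := by
    induction n with
    | zero => simp
    | succ n ih =>
      rw [pow_succ', mul_assoc]
      exact (hν _ (by positivity)).trans ih
  have shell_null (m n : ℕ) : ν (ball a (2 ^ m) \ ball a ((2 ^ n)⁻¹)) = 0 := by
    have ball_subset : ball a ((2 ^ n)⁻¹ : ℝ) ⊆ ball a (2 ^ m) :=
      ball_subset_ball ((inv_le_one_of_one_le₀ (one_le_pow₀ one_le_two)).trans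
        (one_le_pow₀ one_le_two))
    rw [measure_sdiff ball_subset measurableSet_ball.nullMeasurableSet (measure_ne_top _ _),
      tsub_eq_zero_iff_le]
    simpa [pow_add] using iterate (2 ^ n)⁻¹ (by positivity) (m + n)
  refine measure_mono_null (fun x hx => ?_)
    (measure_iUnion_null fun m => measure_iUnion_null (shell_null m))
  obtain ⟨m, hm⟩ := pow_unbounded_of_one_lt (dist x a) one_lt_two
  obtain ⟨n, hn⟩ := pow_unbounded_of_one_lt (dist x a)⁻¹ one_lt_two
  have hxa : 0 < dist x a := dist_pos.2 hx
  exact mem_iUnion₂.2 ⟨m, n, hm, not_lt.2 (inv_le_of_inv_le₀ hxa hn.le)⟩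

lemma measure_eq_zero_or_of_setLIntegral_setLIntegral_eq_zero {X Y : Type*} [MeasurableSpace X]
    [MeasurableSpace Y] {μ : Measure X} {ν : Measure Y} [SFinite ν]
    {f : X → Y → ℝ≥0∞} (hf : Measurable (Function.uncurry f)) (hpos : ∀ x y, f x y ≠ 0)
    {P : Set X} {Q : Set Y} (h : ∫⁻ x in P, ∫⁻ y in Q, f x y ∂ν ∂μ = 0) : μ P = 0 ∨ ν Q = 0 := by
  rw [lintegral_lintegral hf.aemeasurable] at h
  have ae_zero := (lintegral_eq_zero_iff hf).1 h
  have prod_eq_zero : (μ.restrict P).prod (ν.restrict Q) univ = 0 :=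
    measure_mono_null (fun z _ => hpos z.1 z.2) ae_zero
  rwa [← univ_prod_univ, Measure.prod_prod, mul_eq_zero, Measure.restrict_apply_univ,
    Measure.restrict_apply_univ] at prod_eq_zero

section NonlocalInteraction

open Module

variable {E : Type*} [NormedAddCommGroup E] [NormedSpace ℝ E] [MeasurableSpace E]

/-- The nonlocal interaction energy of order `σ` between `P` and `Q`, the quantity from
which fractional perimeters are built. The kernel is valued in `ℝ≥0∞`, so that for
`finrank ℝ E + σ > 0` it is `⊤`, and not a junk `0`, on the diagonal. -/
def nonlocalInteraction (μ : Measure E) (σ : ℝ) (P Q : Set E) : ℝ≥0∞ :=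
  ∫⁻ x in P, ∫⁻ y in Q, ‖y - x‖ₑ ^ (-(finrank ℝ E + σ)) ∂μ ∂μ

variable [BorelSpace E] [FiniteDimensional ℝ E] (μ : Measure E) [μ.IsAddHaarMeasure]

lemma setLIntegral_ball_zero_mul {c : ℝ} (hc : 0 < c) (f : E → ℝ≥0∞) (r : ℝ) :
    ∫⁻ h in ball 0 (c * r), f h ∂μ
      = ENNReal.ofReal (c ^ finrank ℝ E) * ∫⁻ h in ball 0 r, f (c • h) ∂μ := by
  have preimage_ball : (c • ·) ⁻¹' ball (0 : E) (c * r) = ball 0 r := by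
    ext h
    simp [norm_smul, abs_of_pos hc, hc]
  have hcn : 0 < c ^ finrank ℝ E := pow_pos hc _
  rw [← preimage_ball, ← (measurableEmbedding_const_smul₀ hc.ne').lintegral_map,
    ← (measurableEmbedding_const_smul₀ hc.ne').restrict_map, Measure.map_addHaar_smul μ hc.ne',
    Measure.restrict_smul, lintegral_smul_measure, abs_of_pos (inv_pos.2 hcn), smul_eq_mul,
    ← mul_assoc, ← ENNReal.ofReal_mul hcn.le, mul_inv_cancel₀ hcn.ne', ENNReal.ofReal_one, one_mul]

lemma setLIntegral_ball_two_mul_mul_enorm_rpow_le {σ : ℝ} (hσ : 1 ≤ σ) {φ : E → ℝ≥0∞}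
    (hφ : ∀ h, φ ((2 : ℝ) • h) ≤ 2 * φ h) (r : ℝ) :
    ∫⁻ h in ball 0 (2 * r), φ h * ‖h‖ₑ ^ (-(finrank ℝ E + σ)) ∂μ
      ≤ ∫⁻ h in ball 0 r, φ h * ‖h‖ₑ ^ (-(finrank ℝ E + σ)) ∂μ := by
  set q : ℝ := finrank ℝ E + σ
  have enorm_two_smul_rpow (h : E) : ‖(2 : ℝ) • h‖ₑ ^ (-q) = 2 ^ (-q) * ‖h‖ₑ ^ (-q) := by
    rw [enorm_smul, ENNReal.mul_rpow_of_ne_top enorm_ne_top enorm_ne_top,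
      Real.enorm_of_nonneg zero_le_two, ENNReal.ofReal_ofNat]
  have two_pow_mul_le_one : (2 : ℝ≥0∞) ^ finrank ℝ E * 2 * 2 ^ (-q) ≤ 1 := by
    have exponent_nonpos : (finrank ℝ E : ℝ) + 1 + -q ≤ 0 := by linarith
    nth_rw 2 [← ENNReal.rpow_one 2]
    rw [← ENNReal.rpow_natCast, ← ENNReal.rpow_add _ _ two_ne_zero ENNReal.ofNat_ne_top,
      ← ENNReal.rpow_add _ _ two_ne_zero ENNReal.ofNat_ne_top]
    simpa using ENNReal.rpow_le_rpow_of_exponent_le one_le_two exponent_nonpos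
  rw [setLIntegral_ball_zero_mul μ two_pos, ENNReal.ofReal_pow zero_le_two, ENNReal.ofReal_ofNat,
    ← lintegral_const_mul' _ _ (by finiteness)]
  refine lintegral_mono fun h => ?_
  calc 2 ^ finrank ℝ E * (φ ((2 : ℝ) • h) * ‖(2 : ℝ) • h‖ₑ ^ (-q))
      ≤ 2 ^ finrank ℝ E * (2 * φ h * (2 ^ (-q) * ‖h‖ₑ ^ (-q))) := by
        rw [enorm_two_smul_rpow]
        gcongr
        exact hφ h
    _ = 2 ^ finrank ℝ E * 2 * 2 ^ (-q) * (φ h * ‖h‖ₑ ^ (-q)) := by ring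
    _ ≤ φ h * ‖h‖ₑ ^ (-q) := mul_le_of_le_one_left' two_pow_mul_le_one

lemma lintegral_mul_enorm_rpow_eq_zero {σ : ℝ} (hσ : 1 ≤ σ) {φ : E → ℝ≥0∞}
    (hφ : ∀ h, φ ((2 : ℝ) • h) ≤ 2 * φ h)
    (hfin : ∫⁻ h, φ h * ‖h‖ₑ ^ (-(finrank ℝ E + σ)) ∂μ ≠ ⊤) :
    ∫⁻ h, φ h * ‖h‖ₑ ^ (-(finrank ℝ E + σ)) ∂μ = 0 := by
  set f : E → ℝ≥0∞ := fun h => φ h * ‖h‖ₑ ^ (-(finrank ℝ E + σ)) with hf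
  have : IsFiniteMeasure (μ.withDensity f) := isFiniteMeasure_withDensity hfin
  have compl_null : μ.withDensity f {0}ᶜ = 0 := by
    refine measure_compl_singleton_eq_zero_of_measure_ball_two_mul_le _ 0 fun r _ => ?_
    rw [withDensity_apply _ measurableSet_ball, withDensity_apply _ measurableSet_ball]
    exact setLIntegral_ball_two_mul_mul_enorm_rpow_le μ hσ hφ r
  -- The kernel is infinite at `0`, so a finite atom there must vanish.
  have zero_null : μ.withDensity f {0} = 0 := by
    have hatom : μ.withDensity f {0} = φ 0 * μ {0} * ⊤ := by
      have exponent_neg : -(finrank ℝ E + σ) < 0 := by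
        have : (0 : ℝ) ≤ finrank ℝ E := Nat.cast_nonneg _
        linarith
      rw [withDensity_apply _ (measurableSet_singleton 0), lintegral_singleton, hf]
      simp only [enorm_zero, ENNReal.zero_rpow_of_neg exponent_neg, mul_right_comm]
    have hne : φ 0 * μ {0} * ⊤ ≠ ⊤ := hatom ▸ measure_ne_top _ _
    rw [hatom, mul_eq_zero]
    exact Or.inl (by_contra fun h => hne (ENNReal.mul_top h))
  rw [← setLIntegral_univ, ← withDensity_apply _ MeasurableSet.univ, ← union_compl_self {0}]
  exact measure_union_null zero_null compl_null

theorem measure_eq_zero_or_of_nonlocalInteraction_ne_top {σ : ℝ} (hσ : 1 ≤ σ) {P Q : Set E}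
    (hQ : MeasurableSet Q) (hPQ : Convex ℝ (P ∪ Q))
    (hfin : nonlocalInteraction μ σ P Q ≠ ⊤) : μ P = 0 ∨ μ Q = 0 := by
  set q : ℝ := finrank ℝ E + σ
  have interaction_eq : nonlocalInteraction μ σ P Q
      = ∫⁻ h, crossCovariogram μ P Q h * ‖h‖ₑ ^ (-q) ∂μ :=
    setLIntegral_setLIntegral_sub_eq_lintegral_crossCovariogram_mul μ P hQ
      (measurable_enorm.pow_const _)
  have interaction_eq_zero : nonlocalInteraction μ σ P Q = 0 := by
    rw [interaction_eq] at hfin ⊢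
    exact lintegral_mul_enorm_rpow_eq_zero μ hσ (crossCovariogram_two_smul_le μ hPQ) hfin
  have q_pos : 0 < q := by positivity
  have kernel_ne_zero (h : E) : ‖h‖ₑ ^ (-q) ≠ 0 := by
    rw [ENNReal.rpow_neg, ENNReal.inv_ne_zero]
    exact ENNReal.rpow_ne_top_of_nonneg q_pos.le enorm_ne_top
  exact measure_eq_zero_or_of_setLIntegral_setLIntegral_eq_zero (by fun_prop)
    (fun x y => kernel_ne_zero (y - x)) interaction_eq_zero

end NonlocalInteraction

lemma areSeparated_of_isCompact_of_isClosed {X : Type*} [PseudoEMetricSpace X] {s t : Set X}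
    (hs : IsCompact s) (ht : IsClosed t) (hst : Disjoint s t) : AreSeparated s t := by
  obtain ⟨r, hr, hr_lt⟩ := exists_pos_forall_lt_edist hs ht hst
  exact ⟨r, ENNReal.coe_ne_zero.2 hr.ne', fun x hx y hy => (hr_lt x hx y hy).le⟩

lemma edist_rpow_mul_enorm_rpow_neg_eq {E F : Type*} [NormedAddCommGroup E]
    [PseudoMetricSpace F] {p : ℝ} (hp : 0 ≤ p) (q : ℝ) {x y : E} (hxy : x ≠ y) (a b : F) :
    edist a b ^ p * ‖y - x‖ₑ ^ (-q) = ENNReal.ofReal (dist b a ^ p / ‖y - x‖ ^ q) := by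
  have norm_pos : 0 < ‖y - x‖ := norm_pos_iff.2 (sub_ne_zero.2 hxy.symm)
  rw [ENNReal.ofReal_div_of_pos (Real.rpow_pos_of_pos norm_pos _),
    ← ENNReal.ofReal_rpow_of_nonneg dist_nonneg hp, ← ENNReal.ofReal_rpow_of_pos norm_pos,
    ← edist_dist, ofReal_norm, ENNReal.rpow_neg, edist_comm, div_eq_mul_inv]

section GagliardoEnergy

open Module

variable {E F : Type*} [NormedAddCommGroup E] [NormedSpace ℝ E] [MeasurableSpace E]
  [PseudoMetricSpace F]

/-- The Gagliardo energy `E^{s,p}` on `A` of a map from a normed space to a metric space; it is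
`gagliardoE` when both are Euclidean. -/
def gagliardoEnergy (μ : Measure E) (s p : ℝ) (A : Set E) (u : E → F) : ℝ≥0∞ :=
  ∫⁻ x in A, ∫⁻ y in A,
    ENNReal.ofReal (dist (u y) (u x) ^ p / ‖y - x‖ ^ (finrank ℝ E + s * p)) ∂μ ∂μ

lemma gagliardoE_eq_gagliardoEnergy {l ν : ℕ} (s p : ℝ) (A : Set (EuclideanSpace ℝ (Fin l)))
    (u : EuclideanSpace ℝ (Fin l) → EuclideanSpace ℝ (Fin ν)) :
    gagliardoE s p A u = gagliardoEnergy volume s p A u := by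
  simp only [gagliardoE, gagliardoEnergy, dist_eq_norm, finrank_euclideanSpace_fin]

lemma rpow_mul_nonlocalInteraction_le_gagliardoEnergy (μ : Measure E) {s p : ℝ} (hp : 0 ≤ p)
    {A P Q : Set E} (hPA : P ⊆ A) (hQA : Q ⊆ A) {u : E → F} {r : ℝ≥0∞} (hr : r ≠ 0)
    (hu : ∀ᵐ x ∂μ.restrict P, ∀ᵐ y ∂μ.restrict Q, r ≤ edist (u x) (u y)) :
    r ^ p * nonlocalInteraction μ (s * p) P Q ≤ gagliardoEnergy μ s p A u := by
  refine (lintegral_const_mul_le _ _).trans ((lintegral_mono_ae ?_).trans (lintegral_mono_set hPA))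
  filter_upwards [hu] with x hux
  refine (lintegral_const_mul_le _ _).trans ((lintegral_mono_ae ?_).trans (lintegral_mono_set hQA))
  filter_upwards [hux] with y hr_le
  have hxy : x ≠ y := by
    rintro rfl
    exact hr (by simpa using hr_le)
  rw [← edist_rpow_mul_enorm_rpow_neg_eq hp _ hxy]
  gcongr

theorem statement14_general [BorelSpace E] [FiniteDimensional ℝ E] [MeasurableSpace F]
    (μ : Measure E) [μ.IsAddHaarMeasure] {s p : ℝ} (hp : 0 ≤ p) (hsp : 1 ≤ s * p) {A : Set E}
    (hA : MeasurableSet A) (hAc : Convex ℝ A) {K₁ K₂ : Set F} (hK₁ : MeasurableSet K₁)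
    (hK : AreSeparated K₁ K₂) {u : E → F} (hu : Measurable u)
    (hval : ∀ᵐ x ∂μ.restrict A, u x ∈ K₁ ∪ K₂) (hE : gagliardoEnergy μ s p A u < ⊤) :
    (∀ᵐ x ∂μ.restrict A, u x ∈ K₁) ∨ (∀ᵐ x ∂μ.restrict A, u x ∈ K₂) := by
  obtain ⟨r, hr, hr_le⟩ := hK
  set S := u ⁻¹' K₁
  have hS : MeasurableSet S := hu hK₁
  have ae_mem_K₁ : ∀ᵐ x ∂μ.restrict (A ∩ S), u x ∈ K₁ :=
    (ae_restrict_mem (hA.inter hS)).mono fun x hx => hx.2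
  have ae_mem_K₂ : ∀ᵐ x ∂μ.restrict (A \ S), u x ∈ K₂ := by
    filter_upwards [ae_restrict_of_ae_restrict_of_subset sdiff_subset hval,
      ae_restrict_mem (hA.diff hS)] with x hx hxS
    exact hx.resolve_left hxS.2
  have energy_le : r ^ p * nonlocalInteraction μ (s * p) (A ∩ S) (A \ S)
      ≤ gagliardoEnergy μ s p A u := by
    refine rpow_mul_nonlocalInteraction_le_gagliardoEnergy μ hp inter_subset_left sdiff_subset hr ?_
    filter_upwards [ae_mem_K₁] with x hx
    filter_upwards [ae_mem_K₂] with y hy using hr_le _ hx _ hy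
  have rpow_ne_zero : r ^ p ≠ 0 := by simp [ENNReal.rpow_eq_zero_iff, hr, hp.not_gt]
  have interaction_ne_top : nonlocalInteraction μ (s * p) (A ∩ S) (A \ S) ≠ ⊤ :=
    (ENNReal.lt_top_of_mul_ne_top_right (energy_le.trans_lt hE).ne rpow_ne_zero).ne
  have union_convex : Convex ℝ (A ∩ S ∪ A \ S) := by rwa [inter_union_sdiff]
  obtain hnull | hnull := measure_eq_zero_or_of_nonlocalInteraction_ne_top μ hsp (hA.diff hS)
    union_convex interaction_ne_top
  · right
    rw [← inter_union_sdiff A S, ae_restrict_union_iff, Measure.restrict_eq_zero.2 hnull]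
    exact ⟨ae_zero.symm ▸ Filter.eventually_bot, ae_mem_K₂⟩
  · left
    rw [← inter_union_sdiff A S, ae_restrict_union_iff, Measure.restrict_eq_zero.2 hnull]
    exact ⟨ae_mem_K₁, ae_zero.symm ▸ Filter.eventually_bot⟩

end GagliardoEnergy

/-- for `p ≥ 2` and `s = 1 - 1/p`, a map of finite Gagliardo `E^{s,p}` energy on
`B^ℓ` taking values a.e. in the union of two disjoint nonempty compact sets takes its values
a.e. in one of them. -/
theorem statement14 (l ν : ℕ) (hl : 1 ≤ l) (hν : 1 ≤ ν) (p : ℝ) (hp : 2 ≤ p)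
    (K₁ K₂ : Set (EuclideanSpace ℝ (Fin ν)))
    (hK₁c : IsCompact K₁) (hK₂c : IsCompact K₂)
    (hK₁ne : K₁.Nonempty) (hK₂ne : K₂.Nonempty) (hdisj : Disjoint K₁ K₂)
    (u : EuclideanSpace ℝ (Fin l) → EuclideanSpace ℝ (Fin ν)) (hmeas : Measurable u)
    (hval : ∀ᵐ x ∂(volume.restrict (ball (0 : EuclideanSpace ℝ (Fin l)) 1)), u x ∈ K₁ ∪ K₂)
    (hE : gagliardoE (1 - 1 / p) p (ball 0 1) u < ⊤) :
    (∀ᵐ x ∂(volume.restrict (ball (0 : EuclideanSpace ℝ (Fin l)) 1)), u x ∈ K₁) ∨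
    (∀ᵐ x ∂(volume.restrict (ball (0 : EuclideanSpace ℝ (Fin l)) 1)), u x ∈ K₂) := by
  have hsp : 1 ≤ (1 - 1 / p) * p := by
    field_simp
    linarith
  exact statement14_general volume (zero_le_two.trans hp) hsp measurableSet_ball (convex_ball 0 1)
    hK₁c.measurableSet (areSeparated_of_isCompact_of_isClosed hK₁c hK₂c.isClosed hdisj) hmeas hval
    (gagliardoE_eq_gagliardoEnergy _ p _ u ▸ hE)

end
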